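/- Multiplication by a C¹ function of angular momentum preserves the weak transport operator: Let f ∈ D(T) and χ ∈ C¹([0,∞)) be such that (χ∘L)·f ∈ H and (χ∘L)·(T f) ∈ H, where L(x,v) = |x×v|². Then (χ∘L)·f ∈ D(T) and T((χ∘L)·f) = (χ∘L)·(T f) weakly. -/

import Mathlib

/-!
Angular momentum `L` is conserved along characteristics: rotation invariance of `U₀` makes the
force central (`cross_gradV`), hence `T L = 0` (`transport_Lmom`). Consequently, for a polynomial
`p` and a test function `ξ`, the product `(p ∘ L) ξ` is again a spherically symmetric smooth test
function and `T((p ∘ L) ξ) = (p ∘ L) T ξ`, so the weak identity for `f` tested against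
`(p ∘ L) ξ` is the desired identity with `χ = p`.

For general `χ`, the support of `ξ` is compact, so `L` takes values in some `[0, M]` there, and
the Weierstrass theorem gives polynomials converging to `χ` uniformly on `[0, M]`. The weight
`1/|φ'(E)|` is bounded on the support of `ξ`, so both pairings are absolutely convergent
(`integrableOn_pairing`) and dominated convergence (`tendsto_pairing`) passes to the limit. No
derivative of `χ` appears, which is why polynomial approximation in the uniform norm suffices.
-/

open MeasureTheory Real Set Filter

noncomputable section

abbrev V3 : Type := Fin 3 → ℝ

def dot3 (x v : V3) : ℝ := ∑ i, x i * v i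

def Lmom (z : V3 × V3) : ℝ := dot3 z.1 z.1 * dot3 z.2 z.2 - dot3 z.1 z.2 ^ 2

def energy (U0 : V3 → ℝ) (z : V3 × V3) : ℝ := dot3 z.2 z.2 / 2 + U0 z.1

def gradV (g : V3 → ℝ) (x : V3) : V3 := fun i => fderiv ℝ g x (Pi.single i 1)

def transport (U0 : V3 → ℝ) (f : V3 × V3 → ℝ) (z : V3 × V3) : ℝ :=
  fderiv ℝ f z (z.2, -gradV U0 z.1)

def S0 (U0 : V3 → ℝ) (E0 : ℝ) : Set (V3 × V3) := {z | energy U0 z < E0}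

def SO3 : Set (Matrix (Fin 3) (Fin 3) ℝ) := {A | A * A.transpose = 1 ∧ A.det = 1}

def rot (A : Matrix (Fin 3) (Fin 3) ℝ) (z : V3 × V3) : V3 × V3 := (A.mulVec z.1, A.mulVec z.2)

def SphSymAE (U0 : V3 → ℝ) (E0 : ℝ) (f : V3 × V3 → ℝ) : Prop :=
  ∀ A ∈ SO3, ∀ᵐ z ∂(volume.restrict (S0 U0 E0)), f (rot A z) = f z

def memH (φd : ℝ → ℝ) (U0 : V3 → ℝ) (E0 : ℝ) (f : V3 × V3 → ℝ) : Prop :=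
  AEStronglyMeasurable f (volume.restrict (S0 U0 E0)) ∧ SphSymAE U0 E0 f ∧
    IntegrableOn (fun z => f z ^ 2 / |φd (energy U0 z)|) (S0 U0 E0)

def innerH (φd : ℝ → ℝ) (U0 : V3 → ℝ) (E0 : ℝ) (f g : V3 × V3 → ℝ) : ℝ :=
  ∫ z in S0 U0 E0, f z * g z / |φd (energy U0 z)|

def IsSmoothTest (U0 : V3 → ℝ) (E0 : ℝ) (ξ : V3 × V3 → ℝ) : Prop :=
  ContDiff ℝ (⊤ : ℕ∞) ξ ∧ HasCompactSupport ξ ∧ tsupport ξ ⊆ S0 U0 E0 ∧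
    ∀ A ∈ SO3, ∀ z, ξ (rot A z) = ξ z

def weakT (φd : ℝ → ℝ) (U0 : V3 → ℝ) (E0 : ℝ) (f μ : V3 × V3 → ℝ) : Prop :=
  ∀ ξ, IsSmoothTest U0 E0 ξ →
    ∫ z in S0 U0 E0, f z * transport U0 ξ z / |φd (energy U0 z)| =
      -∫ z in S0 U0 E0, μ z * ξ z / |φd (energy U0 z)|

def memD (φd : ℝ → ℝ) (U0 : V3 → ℝ) (E0 : ℝ) (f : V3 × V3 → ℝ) : Prop :=
  memH φd U0 E0 f ∧ ∃ μ, memH φd U0 E0 μ ∧ weakT φd U0 E0 f μ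

structure NewtonianSteadyState (φ φd : ℝ → ℝ) (U0 : V3 → ℝ) (E0 : ℝ) : Prop where
  E0_neg : E0 < 0
  φ_nonneg : ∀ e, 0 ≤ φ e
  φ_deriv : ∀ e < E0, HasDerivAt φ (φd e) e
  φd_cont : ContinuousOn φd (Iio E0)
  φd_neg : ∀ e < E0, φd e < 0
  φ_vanish : ∀ e, E0 ≤ e → φ e = 0
  U0_smooth : ContDiff ℝ 2 U0
  U0_symm : ∀ A ∈ SO3, ∀ x : V3, U0 (A.mulVec x) = U0 x
  U0_decay : Tendsto U0 (cocompact V3) (nhds 0)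
  poisson : ∀ x : V3, ∑ i, fderiv ℝ (fun y => gradV U0 y i) x (Pi.single i (1 : ℝ)) =
      4 * Real.pi * ∫ v : V3, φ (energy U0 (x, v))
  S0_bounded : Bornology.IsBounded (S0 U0 E0)

/-- U₀ as a radial function. -/
def U0rad (U0 : V3 → ℝ) (r : ℝ) : ℝ := U0 (Pi.single 0 r)

/-- Particle energy in the coordinates (r,w,L). -/
def energyR (U0 : V3 → ℝ) (p : ℝ × ℝ × ℝ) : ℝ :=
  p.2.1 ^ 2 / 2 + p.2.2 / (2 * p.1 ^ 2) + U0rad U0 p.1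

/-- The set S₀ in the coordinates (r,w,L). -/
def S0r (U0 : V3 → ℝ) (E0 : ℝ) : Set (ℝ × ℝ × ℝ) :=
  {p | 0 < p.1 ∧ 0 < p.2.2 ∧ energyR U0 p < E0}

/-- The coordinates (r,w,L) = (|x|, x·v/|x|, |x×v|²) of a point (x,v). -/
def coordR (z : V3 × V3) : ℝ × ℝ × ℝ :=
  (Real.sqrt (dot3 z.1 z.1), dot3 z.1 z.2 / Real.sqrt (dot3 z.1 z.1), Lmom z)

/-- The effective potential ψ_L(r) = U₀(r) + L/(2r²). -/
def psiEff (U0 : V3 → ℝ) (L r : ℝ) : ℝ := U0rad U0 r + L / (2 * r ^ 2)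

/-- The derivative ψ_L'(r). -/
def psiEffD (U0 : V3 → ℝ) (L r : ℝ) : ℝ := deriv (U0rad U0) r - L / r ^ 3

/-- rL L is the unique minimizer of the effective potential ψ_L on (0,∞),
    with negative minimum value. -/
def IsEffMinimizer (U0 : V3 → ℝ) (rL : ℝ → ℝ) : Prop :=
  ∀ L > 0, 0 < rL L ∧ IsMinOn (psiEff U0 L) (Ioi 0) (rL L) ∧ psiEff U0 L (rL L) < 0 ∧
    ∀ r ∈ Ioi (0:ℝ), IsMinOn (psiEff U0 L) (Ioi 0) r → r = rL L

/-- rm E L < rp E L are the turning points, i.e. the radii solving ψ_L(r) = E. -/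
def AreTurningPoints (U0 : V3 → ℝ) (E0 : ℝ) (rL : ℝ → ℝ) (rm rp : ℝ → ℝ → ℝ) : Prop :=
  ∀ L > 0, ∀ E, psiEff U0 L (rL L) < E → E < E0 →
    0 < rm E L ∧ rm E L < rL L ∧ rL L < rp E L ∧
      psiEff U0 L (rm E L) = E ∧ psiEff U0 L (rp E L) = E ∧
      ∀ r > 0, psiEff U0 L r = E → r = rm E L ∨ r = rp E L

/-- RW t r w L is the solution of the radial characteristic system
    ṙ = w, ẇ = -ψ_L'(r) with initial data (r,w). -/
def IsRadialFlow (U0 : V3 → ℝ) (RW : ℝ → ℝ → ℝ → ℝ → ℝ × ℝ) : Prop :=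
  ∀ r w L : ℝ, RW 0 r w L = (r, w) ∧
    ∀ t : ℝ, HasDerivAt (fun s => RW s r w L)
      ((RW t r w L).2, -psiEffD U0 L (RW t r w L).1) t

/-- The radial period T(E,L). -/
def Tper (U0 : V3 → ℝ) (rm rp : ℝ → ℝ → ℝ) (E L : ℝ) : ℝ :=
  2 * ∫ r in rm E L..rp E L, 1 / Real.sqrt (2 * E - 2 * psiEff U0 L r)

/-- The projection (P f)(E,L), computed from the representative fr of f in
    the coordinates (r,w,L). -/
def Pcoef (U0 : V3 → ℝ) (rm rp : ℝ → ℝ → ℝ) (RW : ℝ → ℝ → ℝ → ℝ → ℝ × ℝ)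
    (fr : ℝ × ℝ × ℝ → ℝ) (E L : ℝ) : ℝ :=
  ∫ t in (0:ℝ)..1,
    fr ((RW (t * Tper U0 rm rp E L) (rm E L) 0 L).1,
        (RW (t * Tper U0 rm rp E L) (rm E L) 0 L).2, L)

/-! ### Symmetry of the potential and of the angular momentum -/

lemma dot3_mulVec {A : Matrix (Fin 3) (Fin 3) ℝ} (hA : A ∈ SO3) (x y : V3) :
    dot3 (A.mulVec x) (A.mulVec y) = dot3 x y := by
  change A.mulVec x ⬝ᵥ A.mulVec y = x ⬝ᵥ y
  have h : A.transpose * A = 1 := mul_eq_one_comm.mp hA.1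
  rw [Matrix.dotProduct_mulVec, Matrix.vecMul_mulVec, h, Matrix.vecMul_one]

lemma Lmom_rot {A : Matrix (Fin 3) (Fin 3) ℝ} (hA : A ∈ SO3) (z : V3 × V3) :
    Lmom (rot A z) = Lmom z := by
  simp only [Lmom, rot, dot3_mulVec hA]

lemma contDiff_Lmom {n : WithTop ℕ∞} : ContDiff ℝ n Lmom := by
  unfold Lmom dot3
  fun_prop

/-- By the Cauchy-Schwarz inequality. -/
lemma Lmom_nonneg (z : V3 × V3) : 0 ≤ Lmom z := by
  have := Finset.sum_mul_sq_le_sq_mul_sq Finset.univ z.1 z.2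
  simp only [Lmom, dot3]
  simp only [pow_two] at *
  linarith

/-- A rotation-invariant function has zero derivative along an orbit of rotations. -/
lemma fderiv_orbit_eq_zero {U0 : V3 → ℝ} (hd : Differentiable ℝ U0)
    (hU : ∀ A ∈ SO3, ∀ x : V3, U0 (A.mulVec x) = U0 x) (x w : V3)
    (c : ℝ → Matrix (Fin 3) (Fin 3) ℝ) (hc : ∀ t, c t ∈ SO3)
    (h0 : (c 0).mulVec x = x) (hw : HasDerivAt (fun t => (c t).mulVec x) w 0) :
    fderiv ℝ U0 x w = 0 := by
  have h1 : HasFDerivAt U0 (fderiv ℝ U0 x) ((c 0).mulVec x) := by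
    rw [h0]; exact (hd x).hasFDerivAt
  have h2 := h1.comp_hasDerivAt (0 : ℝ) hw
  have h3 : (U0 ∘ fun t => (c t).mulVec x) = fun _ => U0 x := by
    funext t; exact hU _ (hc t) x
  rw [h3] at h2
  exact h2.unique (hasDerivAt_const _ _)

lemma fderiv_eq_sum_gradV (g : V3 → ℝ) (x w : V3) :
    fderiv ℝ g x w = w 0 * gradV g x 0 + w 1 * gradV g x 1 + w 2 * gradV g x 2 := by
  conv_lhs => rw [pi_eq_sum_univ' w]
  simp [Fin.sum_univ_three, gradV, map_add, map_smul]

/-- The force is central: `x × ∇U₀(x) = 0`, written componentwise. -/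
lemma cross_gradV {U0 : V3 → ℝ} (hd : Differentiable ℝ U0)
    (hU : ∀ A ∈ SO3, ∀ x : V3, U0 (A.mulVec x) = U0 x) (x : V3) :
    x 0 * gradV U0 x 1 = x 1 * gradV U0 x 0 ∧ x 1 * gradV U0 x 2 = x 2 * gradV U0 x 1 ∧
      x 0 * gradV U0 x 2 = x 2 * gradV U0 x 0 := by
  have hs : HasDerivAt Real.sin 1 0 := by simpa using Real.hasDerivAt_sin 0
  have hc : HasDerivAt Real.cos 0 0 := by simpa using Real.hasDerivAt_cos 0
  have h01 := fderiv_orbit_eq_zero hd hU x ![-x 1, x 0, 0]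
    (fun t => !![cos t, -sin t, 0; sin t, cos t, 0; 0, 0, 1])
    (fun t => by
      have := Real.sin_sq_add_cos_sq t
      refine ⟨?_, ?_⟩
      · ext i j
        fin_cases i <;> fin_cases j <;>
          simp [Matrix.mul_apply, Fin.sum_univ_three] <;> linarith
      · simp [Matrix.det_fin_three]; linarith)
    (by ext i; fin_cases i <;> simp [Matrix.mulVec, dotProduct, Fin.sum_univ_three])
    (by
      rw [hasDerivAt_pi]
      intro i
      fin_cases i <;> simp [Matrix.mulVec, dotProduct, Fin.sum_univ_three]
      · simpa using (hc.mul_const (x 0)).fun_add (hs.mul_const (x 1)).fun_neg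
      · simpa using (hs.mul_const (x 0)).fun_add (hc.mul_const (x 1))
      · exact hasDerivAt_const _ _)
  have h12 := fderiv_orbit_eq_zero hd hU x ![0, -x 2, x 1]
    (fun t => !![1, 0, 0; 0, cos t, -sin t; 0, sin t, cos t])
    (fun t => by
      have := Real.sin_sq_add_cos_sq t
      refine ⟨?_, ?_⟩
      · ext i j
        fin_cases i <;> fin_cases j <;>
          simp [Matrix.mul_apply, Fin.sum_univ_three] <;> linarith
      · simp [Matrix.det_fin_three]; linarith)
    (by ext i; fin_cases i <;> simp [Matrix.mulVec, dotProduct, Fin.sum_univ_three])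
    (by
      rw [hasDerivAt_pi]
      intro i
      fin_cases i <;> simp [Matrix.mulVec, dotProduct, Fin.sum_univ_three]
      · exact hasDerivAt_const _ _
      · simpa using (hc.mul_const (x 1)).fun_add (hs.mul_const (x 2)).fun_neg
      · simpa using (hs.mul_const (x 1)).fun_add (hc.mul_const (x 2)))
  have h02 := fderiv_orbit_eq_zero hd hU x ![-x 2, 0, x 0]
    (fun t => !![cos t, 0, -sin t; 0, 1, 0; sin t, 0, cos t])
    (fun t => by
      have := Real.sin_sq_add_cos_sq t
      refine ⟨?_, ?_⟩
      · ext i j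
        fin_cases i <;> fin_cases j <;>
          simp [Matrix.mul_apply, Fin.sum_univ_three] <;> linarith
      · simp [Matrix.det_fin_three]; linarith)
    (by ext i; fin_cases i <;> simp [Matrix.mulVec, dotProduct, Fin.sum_univ_three])
    (by
      rw [hasDerivAt_pi]
      intro i
      fin_cases i <;> simp [Matrix.mulVec, dotProduct, Fin.sum_univ_three]
      · simpa using (hc.mul_const (x 0)).fun_add (hs.mul_const (x 2)).fun_neg
      · exact hasDerivAt_const _ _
      · simpa using (hs.mul_const (x 0)).fun_add (hc.mul_const (x 2)))
  rw [fderiv_eq_sum_gradV] at h01 h12 h02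
  simp at h01 h12 h02
  refine ⟨?_, ?_, ?_⟩ <;> linarith

/-- Conservation of angular momentum along characteristics: `T L = 0`. -/
lemma transport_Lmom {U0 : V3 → ℝ} (hd : Differentiable ℝ U0)
    (hU : ∀ A ∈ SO3, ∀ x : V3, U0 (A.mulVec x) = U0 x) (z : V3 × V3) :
    transport U0 Lmom z = 0 := by
  obtain ⟨h01, h12, h02⟩ := cross_gradV hd hU z.1
  -- the derivative of `L` in the direction `w` is the derivative along the line `z + t w`
  have key : ∀ w : V3 × V3, fderiv ℝ Lmom z w =
      2 * dot3 z.1 w.1 * dot3 z.2 z.2 + dot3 z.1 z.1 * (2 * dot3 z.2 w.2)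
        - 2 * dot3 z.1 z.2 * (dot3 z.1 w.2 + dot3 w.1 z.2) := by
    intro w
    have hx : ∀ i, HasDerivAt (fun t : ℝ => z.1 i + t * w.1 i) (w.1 i) 0 := fun i => by
      simpa using ((hasDerivAt_id (0 : ℝ)).mul_const (w.1 i)).const_add (z.1 i)
    have hv : ∀ i, HasDerivAt (fun t : ℝ => z.2 i + t * w.2 i) (w.2 i) 0 := fun i => by
      simpa using ((hasDerivAt_id (0 : ℝ)).mul_const (w.2 i)).const_add (z.2 i)
    have hdot : ∀ (a b a' b' : Fin 3 → ℝ),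
        (∀ i, HasDerivAt (fun t : ℝ => a i + t * a' i) (a' i) 0) →
        (∀ i, HasDerivAt (fun t : ℝ => b i + t * b' i) (b' i) 0) →
        HasDerivAt (fun t : ℝ => dot3 (a + t • a') (b + t • b'))
          (dot3 a' b + dot3 a b') 0 := by
      intro a b a' b' ha hb
      have := HasDerivAt.fun_sum (u := Finset.univ) fun i _ => (ha i).mul (hb i)
      simpa [dot3, Finset.sum_add_distrib] using this
    have hL : HasDerivAt (fun t : ℝ => Lmom (z + t • w)) _ 0 :=
      ((hdot _ _ _ _ hx hx).mul (hdot _ _ _ _ hv hv)).sub ((hdot _ _ _ _ hx hv).pow 2)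
    have hL2 := ((contDiff_Lmom (n := 1)).differentiable (by norm_num) z).lineDeriv_eq_fderiv
      (v := w)
    rw [← hL2, lineDeriv, hL.deriv]
    simp [dot3, Fin.sum_univ_three]
    ring
  rw [transport, key]
  simp only [dot3, Fin.sum_univ_three, Pi.neg_apply]
  linear_combination
    (-2 * (z.1 0 * z.2 1 - z.1 1 * z.2 0)) * h01 + (-2 * (z.1 1 * z.2 2 - z.1 2 * z.2 1)) * h12
      + (-2 * (z.1 0 * z.2 2 - z.1 2 * z.2 0)) * h02

/-! ### Test functions -/

lemma transport_poly_mul {U0 : V3 → ℝ} (hd : Differentiable ℝ U0)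
    (hU : ∀ A ∈ SO3, ∀ x : V3, U0 (A.mulVec x) = U0 x) {ξ : V3 × V3 → ℝ}
    (hξ : Differentiable ℝ ξ) (p : Polynomial ℝ) (z : V3 × V3) :
    transport U0 (fun z => p.eval (Lmom z) * ξ z) z = p.eval (Lmom z) * transport U0 ξ z := by
  have hL : HasFDerivAt Lmom (fderiv ℝ Lmom z) z :=
    ((contDiff_Lmom (n := 1)).differentiable (by norm_num) z).hasFDerivAt
  have hp := (p.hasDerivAt (Lmom z)).comp_hasFDerivAt z hL
  have h0 := transport_Lmom hd hU z
  simp only [transport] at h0 ⊢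
  have := (hp.mul (hξ z).hasFDerivAt).fderiv
  change fderiv ℝ (fun z => p.eval (Lmom z) * ξ z) z = _ at this
  rw [this]
  simp [h0]

lemma isSmoothTest_poly_mul {U0 : V3 → ℝ} {E0 : ℝ} {ξ : V3 × V3 → ℝ}
    (hξ : IsSmoothTest U0 E0 ξ) (p : Polynomial ℝ) :
    IsSmoothTest U0 E0 (fun z => p.eval (Lmom z) * ξ z) := by
  obtain ⟨h1, h2, h3, h4⟩ := hξ
  refine ⟨?_, h2.mul_left, (tsupport_mul_subset_right).trans h3, ?_⟩
  · have hp : ContDiff ℝ (⊤ : ℕ∞) (fun x : ℝ => p.eval x) := by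
      simpa using p.contDiff_aeval (R := ℝ) (𝕜 := ℝ) (⊤ : ℕ∞)
    exact (hp.comp contDiff_Lmom).mul h1
  · intro A hA z
    simp only [Lmom_rot hA, h4 A hA]

lemma continuous_transport {U0 : V3 → ℝ} (hU : ContDiff ℝ 2 U0) {ξ : V3 × V3 → ℝ}
    (hξ : ContDiff ℝ (⊤ : ℕ∞) ξ) : Continuous (transport U0 ξ) := by
  have h1 : Continuous (fderiv ℝ ξ) := hξ.continuous_fderiv (by simp)
  have h2 : Continuous (fderiv ℝ U0) := hU.continuous_fderiv (by norm_num)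
  have h3 : Continuous (gradV U0) :=
    continuous_pi fun i => h2.clm_apply continuous_const
  exact h1.clm_apply (continuous_snd.prodMk (h3.comp continuous_fst).neg)

lemma transport_eq_zero_of_notMem {U0 : V3 → ℝ} {ξ : V3 × V3 → ℝ} {z : V3 × V3}
    (hz : z ∉ tsupport ξ) : transport U0 ξ z = 0 := by
  have : fderiv ℝ ξ z = 0 := by
    by_contra h
    exact hz (support_fderiv_subset ℝ h)
  simp [transport, this]

/-! ### Integrability and passage to the limit -/

lemma continuous_energy {U0 : V3 → ℝ} (hU : Continuous U0) : Continuous (energy U0) := by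
  unfold energy dot3
  fun_prop

/-- Elements of `H` pair absolutely with continuous functions vanishing off a compact subset
of `S₀`, because the weight `1/|φ'(E)|` is bounded there. -/
lemma integrableOn_pairing {φ φd : ℝ → ℝ} {U0 : V3 → ℝ} {E0 : ℝ}
    (hS : NewtonianSteadyState φ φd U0 E0) {f g : V3 × V3 → ℝ} (hf : memH φd U0 E0 f)
    (hg : Continuous g) {K : Set (V3 × V3)} (hK : IsCompact K) (hKS : K ⊆ S0 U0 E0)
    (hgK : ∀ z ∉ K, g z = 0) :
    IntegrableOn (fun z => f z * g z / |φd (energy U0 z)|) (S0 U0 E0) := by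
  have hE := continuous_energy hS.U0_smooth.continuous
  have hopen : IsOpen (S0 U0 E0) := isOpen_lt hE continuous_const
  have hw : ContinuousOn (fun z => |φd (energy U0 z)|⁻¹) (S0 U0 E0) := by
    refine ContinuousOn.inv₀ ?_ fun z hz => abs_ne_zero.mpr (hS.φd_neg _ hz).ne
    exact (hS.φd_cont.comp hE.continuousOn fun z hz => hz).abs
  obtain ⟨C, hC⟩ := hK.exists_bound_of_continuousOn (hw.mono hKS)
  obtain ⟨B, hB⟩ := hK.exists_bound_of_continuousOn hg.continuousOn
  have hint : Integrable (fun z => |B| * (f z ^ 2 / |φd (energy U0 z)|)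
      + K.indicator (fun _ => |B| * |C|) z) (volume.restrict (S0 U0 E0)) := by
    refine (hf.2.2.const_mul |B|).add ?_
    refine (IntegrableOn.integrable_indicator ?_ hK.measurableSet).integrableOn
    exact integrableOn_const hK.measure_lt_top.ne
  refine hint.mono' ?_ (Eventually.of_forall fun z => ?_)
  · simp only [div_eq_mul_inv]
    exact (hf.1.mul hg.aestronglyMeasurable).mul
      (hw.aestronglyMeasurable hopen.measurableSet)
  · by_cases hz : z ∈ K
    · have h1 := hC z hz
      have h2 := hB z hz
      simp only [Real.norm_eq_abs, abs_inv, abs_abs] at h1 h2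
      have h1' := h1.trans (le_abs_self C)
      have h2' := h2.trans (le_abs_self B)
      have h3 : |f z| ≤ f z ^ 2 + 1 := by
        rw [← sq_abs]; nlinarith [sq_nonneg (|f z| - 1 / 2)]
      have hi : 0 ≤ |φd (energy U0 z)|⁻¹ := by positivity
      simp only [Set.indicator_of_mem hz, Real.norm_eq_abs, div_eq_mul_inv, abs_mul, abs_inv,
        abs_abs]
      calc |f z| * |g z| * |φd (energy U0 z)|⁻¹
          ≤ (f z ^ 2 + 1) * |B| * |φd (energy U0 z)|⁻¹ := by gcongr
        _ = |B| * (f z ^ 2 * |φd (energy U0 z)|⁻¹) + |B| * |φd (energy U0 z)|⁻¹ := by ring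
        _ ≤ _ := by gcongr
    · simp only [hgK z hz, Set.indicator_of_notMem hz, mul_zero, zero_div, norm_zero, add_zero]
      positivity

/-- Uniform convergence of the multipliers `p n ∘ L` on a set off which `g` vanishes passes to
the limit in the weighted pairing. -/
lemma tendsto_pairing {φd : ℝ → ℝ} {U0 : V3 → ℝ} {E0 : ℝ} {f g : V3 × V3 → ℝ}
    {K : Set (V3 × V3)} (hgK : ∀ z ∉ K, g z = 0)
    (hint : IntegrableOn (fun z => f z * g z / |φd (energy U0 z)|) (S0 U0 E0))
    {χ : ℝ → ℝ} {p : ℕ → Polynomial ℝ} {B : ℝ} (hB : ∀ z ∈ K, |χ (Lmom z)| ≤ B)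
    (hp : ∀ n, ∀ z ∈ K, |(p n).eval (Lmom z) - χ (Lmom z)| < 1 / ((n : ℝ) + 1)) :
    Tendsto (fun n => ∫ z in S0 U0 E0,
        f z * ((p n).eval (Lmom z) * g z) / |φd (energy U0 z)|) atTop
      (nhds (∫ z in S0 U0 E0, χ (Lmom z) * f z * g z / |φd (energy U0 z)|)) := by
  refine tendsto_integral_of_dominated_convergence
    (fun z => (B + 1) * ‖f z * g z / |φd (energy U0 z)|‖) ?_ (hint.norm.const_mul _) ?_ ?_
  · intro n
    have hc : Continuous (fun z : V3 × V3 => (p n).eval (Lmom z)) :=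
      (p n).continuous.comp (contDiff_Lmom (n := 0)).continuous
    refine (hc.aestronglyMeasurable.mul hint.1).congr (Eventually.of_forall fun z => ?_)
    simp only [Pi.mul_apply]
    ring
  · intro n
    refine Eventually.of_forall fun z => ?_
    by_cases hz : z ∈ K
    · have h1 := hp n z hz
      have h2 := hB z hz
      have h3 : 1 / ((n : ℝ) + 1) ≤ 1 := by
        rw [div_le_one (by positivity)]; linarith [(Nat.cast_nonneg n : (0 : ℝ) ≤ n)]
      have h4 : |(p n).eval (Lmom z)| ≤ B + 1 := by
        have := abs_add_le ((p n).eval (Lmom z) - χ (Lmom z)) (χ (Lmom z))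
        rw [sub_add_cancel] at this
        linarith
      have : f z * ((p n).eval (Lmom z) * g z) / |φd (energy U0 z)| =
          (p n).eval (Lmom z) * (f z * g z / |φd (energy U0 z)|) := by ring
      rw [this, norm_mul]
      exact mul_le_mul_of_nonneg_right h4 (norm_nonneg _)
    · simp [hgK z hz]
  · refine Eventually.of_forall fun z => ?_
    by_cases hz : z ∈ K
    · have hlim : Tendsto (fun n => (p n).eval (Lmom z)) atTop (nhds (χ (Lmom z))) := by
        rw [tendsto_iff_dist_tendsto_zero]
        refine squeeze_zero (fun _ => dist_nonneg) (fun n => ?_)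
          (tendsto_one_div_add_atTop_nhds_zero_nat (𝕜 := ℝ))
        exact (hp n z hz).le
      have := hlim.mul_const (f z * g z / |φd (energy U0 z)|)
      refine (this.congr fun n => ?_).trans (le_of_eq ?_)
      · ring
      · congr 1; ring
    · simp [hgK z hz]

/-- Lemma 3.1 (a): multiplication by a C¹ function of the angular momentum preserves
    the weak transport operator: if f ∈ D(T), χ ∈ C¹([0,∞)) and (χ∘L)·f, (χ∘L)·(Tf) ∈ H,
    then (χ∘L)·f ∈ D(T) with T((χ∘L)·f) = (χ∘L)·(Tf) weakly. -/
theorem transport_mul_angular_momentum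
    (φ φd : ℝ → ℝ) (U0 : V3 → ℝ) (E0 : ℝ)
    (hS : NewtonianSteadyState φ φd U0 E0)
    (f μ : V3 × V3 → ℝ)
    (hf : memH φd U0 E0 f) (hμ : memH φd U0 E0 μ) (hw : weakT φd U0 E0 f μ)
    (χ : ℝ → ℝ) (hχ : ContDiffOn ℝ 1 χ (Ici 0))
    (h1 : memH φd U0 E0 (fun z => χ (Lmom z) * f z))
    (h2 : memH φd U0 E0 (fun z => χ (Lmom z) * μ z)) :
    memD φd U0 E0 (fun z => χ (Lmom z) * f z) ∧
      weakT φd U0 E0 (fun z => χ (Lmom z) * f z) (fun z => χ (Lmom z) * μ z) := by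
  suffices h : weakT φd U0 E0 (fun z => χ (Lmom z) * f z) (fun z => χ (Lmom z) * μ z) from
    ⟨⟨h1, _, h2, h⟩, h⟩
  intro ξ hξ
  have hd : Differentiable ℝ U0 := hS.U0_smooth.differentiable (by norm_num)
  have hK : IsCompact (tsupport ξ) := hξ.2.1
  have hLc : Continuous Lmom := (contDiff_Lmom (n := 0)).continuous
  obtain ⟨M, hM⟩ := hK.exists_bound_of_continuousOn hLc.continuousOn
  have hLM : ∀ z ∈ tsupport ξ, Lmom z ∈ Icc 0 M := fun z hz =>
    ⟨Lmom_nonneg z, (le_abs_self _).trans (hM z hz)⟩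
  have hχc : ContinuousOn χ (Icc 0 M) := hχ.continuousOn.mono Icc_subset_Ici_self
  obtain ⟨B, hB⟩ := isCompact_Icc.exists_bound_of_continuousOn hχc
  choose p hp using fun n : ℕ =>
    exists_polynomial_near_of_continuousOn 0 M χ hχc (1 / ((n : ℝ) + 1)) (by positivity)
  have hB' : ∀ z ∈ tsupport ξ, |χ (Lmom z)| ≤ B := fun z hz => hB _ (hLM z hz)
  have hp' : ∀ n, ∀ z ∈ tsupport ξ, |(p n).eval (Lmom z) - χ (Lmom z)| < 1 / ((n : ℝ) + 1) :=
    fun n z hz => hp n _ (hLM z hz)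
  have hT0 : ∀ z ∉ tsupport ξ, transport U0 ξ z = 0 := fun z => transport_eq_zero_of_notMem
  have hξ0 : ∀ z ∉ tsupport ξ, ξ z = 0 := fun z => image_eq_zero_of_notMem_tsupport
  have lim1 := tendsto_pairing hT0 (integrableOn_pairing hS hf
    (continuous_transport hS.U0_smooth hξ.1) hK hξ.2.2.1 hT0) hB' hp'
  have lim2 := tendsto_pairing hξ0 (integrableOn_pairing hS hμ
    hξ.1.continuous hK hξ.2.2.1 hξ0) hB' hp'
  refine tendsto_nhds_unique lim1 (lim2.neg.congr fun n => ?_)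
  rw [← hw _ (isSmoothTest_poly_mul hξ (p n))]
  simp only [transport_poly_mul hd hS.U0_symm (hξ.1.differentiable (by simp))]

end
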